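/- arXiv:2311.13582 — 2 statements merged into one kernel-verified Lean document; each statement's English description precedes it below -/
import Mathlib

section
/- Let m ≥ 1 and n ≥ 0, and let G_1, …, G_n be graphs. For each i with 1 ≤ i ≤ n, let G'_i = G_i − w_i for some vertex w_i of G_i, and let r_1, …, r_n be integers such that r_i ≥ R(C_4, …, C_4, G_1, …, G_{i−1}, G'_i, G_{i+1}, …, G_n) (with m copies of C_4). Assume that R = R(C_4, …, C_4, G_1, …, G_n) (with m copies of C_4) satisfies R > max_{1 ≤ i ≤ n} |V(G_i)|, and assume moreover that if m = 1 then G_i ≠ K_2 for some i ∈ {1, …, n}. Then R ≤ (Σ_{i=1}^n r_i) − n + 1 + (m² + m)/2 + ⌈ m · √( (m+1)²/4 + (Σ_{i=1}^n r_i) − n ) ⌉. -/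
open SimpleGraph

/-- A graph bundled with its vertex type. -/
structure VGraph : Type 1 where
  V : Type
  G : SimpleGraph V

/-- The cycle `C₄` as a bundled graph. -/
def C4 : VGraph := ⟨Fin 4, SimpleGraph.cycleGraph 4⟩

/-- The path `P₃` (on 3 vertices) as a bundled graph. -/
def P3 : VGraph := ⟨Fin 3, SimpleGraph.pathGraph 3⟩

/-- The complete graph `K_k` as a bundled graph. -/
def Kc (k : ℕ) : VGraph := ⟨Fin k, ⊤⟩

/-- The star `K_{1,k}`: vertex `0` is the center, joined to the `k` leaves. -/
def starGraph (k : ℕ) : SimpleGraph (Fin (k + 1)) :=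
  SimpleGraph.fromRel (fun u _ => u = 0)

/-- The book `B_k = K₂ + kK₁`: vertices `0, 1` form the spine, joined
to everything; the `k` pages are pairwise nonadjacent. -/
def bookGraph (k : ℕ) : SimpleGraph (Fin (k + 2)) :=
  SimpleGraph.fromRel (fun u _ => u.val < 2)

/-- Deletion of a vertex (with all incident edges) from a bundled graph. -/
def VGraph.delete (X : VGraph) (w : X.V) : VGraph :=
  ⟨{v : X.V // v ≠ w}, X.G.induce {v | v ≠ w}⟩

/-- Disjoint union with a single isolated vertex, `G ∪ K₁`. -/
def VGraph.addK1 (X : VGraph) : VGraph :=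
  ⟨Option X.V, SimpleGraph.fromRel (fun u v => ∃ a b, u = some a ∧ v = some b ∧ X.G.Adj a b)⟩

/-- `ramseyProp l N` : every coloring of the edges of the complete graph on `N`
vertices with `l.length` colors admits, for some color `i`, a subgraph isomorphic
to the `i`-th graph of `l` all of whose edges have color `i`. -/
def ramseyProp (l : List VGraph) (N : ℕ) : Prop :=
  ∀ c : Sym2 (Fin N) → Fin l.length,
    ∃ (i : Fin l.length) (f : (l.get i).V ↪ Fin N),
      ∀ u v, (l.get i).G.Adj u v → c s(f u, f v) = i

/-- The Ramsey number of a list of graphs: the least positive `N`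
satisfying `ramseyProp l N`. -/
noncomputable def ramseyNumber (l : List VGraph) : ℕ :=
  sInf {N | 0 < N ∧ ramseyProp l N}

/-!
Suppose that the bound fails and color the pairs of `N = R - 1` points without a copy of any of the
given graphs. Deleting `w_i` from `G_i` shows that every vertex has degree at most `r_i - 1` in the
color of `G_i`, so the `m` colors of `C₄` have total degree at least `D = N - 1 - ∑ (r_i - 1)` at
every vertex. In a `C₄`-free graph two vertices have at most one common neighbor; counting paths of
length two in the `m` color classes and using convexity gives `D ^ 2 - m D ≤ m ^ 2 (N - 1)`, and the
assumed size of `N` is exactly the reverse inequality.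

Hence equality holds throughout: each of the `m` color classes is regular and any two of its
vertices have exactly one common neighbor. The trace argument from the proof of the friendship
theorem shows that it is a triangle. This leaves only `m = 1`, `N = 3` and `r_i = 1` for all `i`,
and then every `G_i` is `K₂`.
-/

section FriendshipTheorem

variable {V R : Type*} [Fintype V] {G : SimpleGraph V} [DecidableRel G.Adj]

lemma adjMatrix_mul_of_one [Semiring R] {k : ℕ} (h : G.IsRegularOfDegree k) :
    G.adjMatrix R * Matrix.of (fun _ _ : V ↦ (1 : R)) = (k : R) • Matrix.of fun _ _ ↦ 1 := by
  ext u v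
  simp [h u]

lemma adjMatrix_pow_add_two_of_isSRGWith [DecidableEq V] [CommSemiring R] {n k ℓ : ℕ}
    (h : G.IsSRGWith n k ℓ ℓ) (hkℓ : (k : R) = ℓ) (j : ℕ) :
    G.adjMatrix R ^ (j + 2) = (k : R) ^ (j + 1) • Matrix.of fun _ _ ↦ 1 := by
  induction j with
  | zero =>
    ext u v
    rw [zero_add, h.matrix_eq]
    simp only [Matrix.add_apply, Matrix.smul_apply, adjMatrix_apply, compl_adj, Matrix.of_apply]
    obtain rfl | huv := eq_or_ne u v
    · simp
    · by_cases hadj : G.Adj u v <;> simp [huv, hadj, hkℓ]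
  | succ j ih =>
    rw [show j + 1 + 2 = j + 2 + 1 by ring, pow_succ', ih, Matrix.mul_smul,
      adjMatrix_mul_of_one h.regular, smul_smul, ← pow_succ]

lemma degree_mul_card_of_isSRGWith [CommSemiring R] [Nonempty V] {n k ℓ : ℕ}
    (h : G.IsSRGWith n k ℓ ℓ) (hkℓ : (k : R) = ℓ) : (k * Fintype.card V : R) = (k : R) ^ 2 := by
  classical
  obtain ⟨v⟩ := ‹Nonempty V›
  have hrow : G.adjMatrix R ^ 2 * Matrix.of (fun _ _ ↦ (1 : R)) =
      (k : R) ^ 2 • Matrix.of fun _ _ ↦ 1 := by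
    rw [pow_two, Matrix.mul_assoc, adjMatrix_mul_of_one h.regular, Matrix.mul_smul,
      adjMatrix_mul_of_one h.regular, smul_smul, ← pow_two]
  rw [adjMatrix_pow_add_two_of_isSRGWith h hkℓ 0] at hrow
  simpa [Matrix.mul_apply, mul_comm] using congrFun₂ hrow v v

-- Modulo `p`, `tr (A ^ p) = (tr A) ^ p = 0` for the adjacency matrix `A`, whereas `A ^ p` is an
-- explicit multiple of the all-ones matrix, whose trace works out to `k ^ p`.
theorem prime_dvd_degree_of_isSRGWith [Nonempty V] {n k ℓ p : ℕ} (h : G.IsSRGWith n k ℓ ℓ)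
    (hp : p.Prime) (hkℓ : k ≡ ℓ [MOD p]) : p ∣ k := by
  classical
  have : Fact p.Prime := ⟨hp⟩
  have hcast : (k : ZMod p) = ℓ := (ZMod.natCast_eq_natCast_iff k ℓ p).2 hkℓ
  obtain ⟨j, rfl⟩ := Nat.exists_eq_add_of_le' hp.two_le
  have htrace : Matrix.trace (G.adjMatrix (ZMod (j + 2)) ^ (j + 2)) = 0 := by
    rw [ZMod.trace_pow_card, trace_adjMatrix, zero_pow hp.ne_zero]
  have hpow : (k : ZMod (j + 2)) ^ (j + 2) = 0 := by
    rw [adjMatrix_pow_add_two_of_isSRGWith h hcast, Matrix.trace_smul, pow_succ, smul_eq_mul,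
      mul_assoc] at htrace
    simpa [Matrix.trace, degree_mul_card_of_isSRGWith h hcast, ← pow_add] using htrace
  exact (ZMod.natCast_eq_zero_iff k _).1 (eq_zero_of_pow_eq_zero hpow)

theorem degree_eq_zero_or_two_of_isSRGWith_one_one [Nonempty V] {n k : ℕ}
    (h : G.IsSRGWith n k 1 1) : k = 0 ∨ k = 2 := by
  obtain rfl | hk := Nat.eq_zero_or_pos k
  · exact .inl rfl
  refine .inr ?_
  by_contra hk2
  obtain ⟨p, hp, hdvd⟩ := Nat.exists_prime_and_dvd (show k - 1 ≠ 1 by omega)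
  have hpk := prime_dvd_degree_of_isSRGWith h hp ((Nat.modEq_iff_dvd' hk).2 hdvd).symm
  exact hp.one_lt.not_ge (Nat.le_of_dvd one_pos ((Nat.dvd_sub_iff_right hk hpk).1 hdvd))

lemma card_eq_three_of_isSRGWith_two_one_one [Nonempty V] {n : ℕ} (h : G.IsSRGWith n 2 1 1) :
    n = 3 := by
  obtain ⟨v⟩ := ‹Nonempty V›
  have hlt : 2 < n := by
    simpa only [h.regular v, h.card] using G.degree_lt_card_verts v
  have hparam := h.param_eq G (by omega)
  omega

end FriendshipTheorem

section CommonNeighbors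

variable {V : Type*} {G : SimpleGraph V}

lemma subsingleton_commonNeighbors_of_cycleGraph_four_free (hG : (cycleGraph 4).Free G) {u v : V}
    (huv : u ≠ v) : (G.commonNeighbors u v).Subsingleton := by
  rintro x ⟨hux, hvx⟩ y ⟨huy, hvy⟩
  rw [mem_neighborSet] at hux hvx huy hvy
  by_contra hxy
  refine hG ⟨⟨![u, x, v, y], fun {a b} hab ↦ ?_⟩, fun a b hab ↦ ?_⟩
  · rw [cycleGraph_adj] at hab
    fin_cases a <;> fin_cases b <;>
      first | exact absurd hab (by decide) | simpa [adj_comm]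
  · have := hux.ne
    have := hvx.ne
    have := huy.ne
    have := hvy.ne
    fin_cases a <;> fin_cases b <;> simp_all

variable [Fintype V]

variable (V) in
lemma cast_card_offDiag_univ :
    ((Finset.univ : Finset V).offDiag.card : ℝ) = Fintype.card V * (Fintype.card V - 1) := by
  simp [Finset.offDiag_card, Nat.le_mul_self, mul_sub]

variable [DecidableRel G.Adj]

variable (G) in
-- Both sides count the triples `(u, v, x)` with `x` adjacent to `u` and `v`, those with `u = v`
-- being counted by the sum of the degrees.
lemma sum_card_commonNeighbors_add_sum_degree :
    ∑ p ∈ (Finset.univ : Finset V).offDiag, Fintype.card (G.commonNeighbors p.1 p.2) +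
      ∑ x, G.degree x = ∑ x, G.degree x ^ 2 := by
  have hfst (p : V × V) : Fintype.card (G.commonNeighbors p.1 p.2) =
      (Finset.univ.bipartiteAbove (fun p x ↦ G.Adj p.1 x ∧ G.Adj p.2 x) p).card :=
    Fintype.card_subtype _
  have hsnd (x : V) : Finset.univ.offDiag.bipartiteBelow
      (fun p x ↦ G.Adj p.1 x ∧ G.Adj p.2 x) x = (G.neighborFinset x).offDiag := by
    ext p
    simp only [Finset.mem_bipartiteBelow, Finset.mem_offDiag, mem_neighborFinset, adj_comm,
      Finset.mem_univ, true_and]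
    tauto
  simp only [hfst, Finset.sum_card_bipartiteAbove_eq_sum_card_bipartiteBelow, hsnd,
    Finset.offDiag_card, card_neighborFinset_eq_degree, ← Finset.sum_add_distrib]
  refine Finset.sum_congr rfl fun x _ ↦ ?_
  rw [Nat.sub_add_cancel (Nat.le_mul_self _), pow_two]

variable (G) in
lemma sum_degree_sq_sub_degree_eq :
    ∑ x, ((G.degree x : ℝ) ^ 2 - G.degree x) =
      ∑ p ∈ (Finset.univ : Finset V).offDiag, (Fintype.card (G.commonNeighbors p.1 p.2) : ℝ) := by
  rw [Finset.sum_sub_distrib, sub_eq_iff_eq_add]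
  exact_mod_cast (sum_card_commonNeighbors_add_sum_degree G).symm

lemma card_commonNeighbors_le_one (hG : (cycleGraph 4).Free G) {p : V × V}
    (hp : p ∈ (Finset.univ : Finset V).offDiag) :
    (Fintype.card (G.commonNeighbors p.1 p.2) : ℝ) ≤ 1 :=
  mod_cast Fintype.card_le_one_iff_subsingleton.2 <| (Set.subsingleton_coe _).2 <|
    subsingleton_commonNeighbors_of_cycleGraph_four_free hG (Finset.mem_offDiag.1 hp).2.2

lemma sum_degree_sq_sub_degree_le (hG : (cycleGraph 4).Free G) :
    ∑ x, ((G.degree x : ℝ) ^ 2 - G.degree x) ≤ Fintype.card V * (Fintype.card V - 1) := by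
  rw [sum_degree_sq_sub_degree_eq, ← cast_card_offDiag_univ, Finset.cast_card]
  exact Finset.sum_le_sum fun p hp ↦ card_commonNeighbors_le_one hG hp

lemma card_commonNeighbors_eq_one_of_sum_degree_sq_sub_degree_eq (hG : (cycleGraph 4).Free G)
    (heq : ∑ x, ((G.degree x : ℝ) ^ 2 - G.degree x) = Fintype.card V * (Fintype.card V - 1)) :
    Pairwise fun u v ↦ Fintype.card (G.commonNeighbors u v) = 1 := by
  intro u v huv
  rw [sum_degree_sq_sub_degree_eq, ← cast_card_offDiag_univ, Finset.cast_card] at heq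
  have hone := (Finset.sum_eq_sum_iff_of_le fun p hp ↦ card_commonNeighbors_le_one hG hp).1 heq
  exact_mod_cast hone (u, v) (by simpa using huv)

end CommonNeighbors

section SquareSums

lemma card_mul_sum_sq_sub_eq {ι R : Type*} [Fintype ι] [CommRing R] (d : ι → R) (D : R) :
    (Fintype.card ι : R) * (Fintype.card ι * ∑ j, (d j ^ 2 - d j) - (D ^ 2 - Fintype.card ι * D)) =
      ∑ j, (Fintype.card ι * d j - D) ^ 2 +
        Fintype.card ι * ((2 * D - Fintype.card ι) * (∑ j, d j - D)) := by
  have hsq (j : ι) : ((Fintype.card ι : R) * d j - D) ^ 2 =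
      (Fintype.card ι : R) ^ 2 * (d j ^ 2 - d j) +
        ((Fintype.card ι : R) ^ 2 - 2 * Fintype.card ι * D) * d j + D ^ 2 := by ring
  simp only [hsq, Finset.sum_add_distrib, ← Finset.mul_sum, Finset.sum_const, Finset.card_univ,
    nsmul_eq_mul]
  ring

variable {ι R : Type*} [Fintype ι] [CommRing R] [LinearOrder R] [IsStrictOrderedRing R]
  {d : ι → R} {D : R}

lemma sq_sub_card_mul_le [Nonempty ι] (hD : (Fintype.card ι : R) ≤ 2 * D) (hd : D ≤ ∑ j, d j) :
    D ^ 2 - Fintype.card ι * D ≤ Fintype.card ι * ∑ j, (d j ^ 2 - d j) := by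
  have hpos : (0 : R) < Fintype.card ι := by exact_mod_cast Fintype.card_pos
  refine sub_nonneg.1 (nonneg_of_mul_nonneg_right ?_ hpos)
  rw [card_mul_sum_sq_sub_eq]
  have := mul_nonneg (sub_nonneg.2 hD) (sub_nonneg.2 hd)
  positivity

lemma card_mul_eq_of_sq_sub_card_mul_eq (hD : (Fintype.card ι : R) ≤ 2 * D) (hd : D ≤ ∑ j, d j)
    (heq : D ^ 2 - Fintype.card ι * D = Fintype.card ι * ∑ j, (d j ^ 2 - d j)) (j : ι) :
    Fintype.card ι * d j = D := by
  have hid := card_mul_sum_sq_sub_eq d D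
  rw [heq, sub_self, mul_zero] at hid
  have hslack := mul_nonneg (Fintype.card ι).cast_nonneg
    (mul_nonneg (sub_nonneg.2 hD) (sub_nonneg.2 hd))
  have hsq : ∑ j, (Fintype.card ι * d j - D) ^ 2 = 0 :=
    le_antisymm (by linarith) (Finset.sum_nonneg fun _ _ ↦ sq_nonneg _)
  rw [Finset.sum_eq_zero_iff_of_nonneg fun _ _ ↦ sq_nonneg _] at hsq
  exact sub_eq_zero.1 (sq_eq_zero_iff.1 (hsq j (Finset.mem_univ j)))

end SquareSums

section LayeredGraphs

variable {ι V : Type*} [Fintype ι] [Nonempty ι] [Fintype V] {G : ι → SimpleGraph V}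
  [∀ j, DecidableRel (G j).Adj] {D : ℝ}

-- Counting the paths of length two in all layers bounds `∑ j, ∑ v, (deg² - deg)` from both sides;
-- the hypotheses force the two bounds to agree.
lemma regular_of_cycleGraph_four_free_of_le_sum_degree (hG : ∀ j, (cycleGraph 4).Free (G j))
    (hD : (Fintype.card ι : ℝ) ≤ 2 * D) (hdeg : ∀ v, D ≤ ∑ j, ((G j).degree v : ℝ))
    (hcard : (Fintype.card ι : ℝ) ^ 2 * (Fintype.card V - 1) ≤ D ^ 2 - Fintype.card ι * D) (j : ι) :
    (∀ v, Fintype.card ι * ((G j).degree v : ℝ) = D) ∧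
      Pairwise fun u v ↦ Fintype.card ((G j).commonNeighbors u v) = 1 := by
  have hm : (0 : ℝ) < Fintype.card ι := by exact_mod_cast Fintype.card_pos (α := ι)
  have hvertex (v : V) := sq_sub_card_mul_le hD (hdeg v)
  have hlayer (j : ι) := sum_degree_sq_sub_degree_le (hG j)
  have hlower : ∑ _v : V, (D ^ 2 - Fintype.card ι * D) ≤
      ∑ v, Fintype.card ι * ∑ j, (((G j).degree v : ℝ) ^ 2 - (G j).degree v) :=
    Finset.sum_le_sum fun v _ ↦ hvertex v
  have hswap : ∑ v, Fintype.card ι * ∑ j, (((G j).degree v : ℝ) ^ 2 - (G j).degree v) =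
      Fintype.card ι * ∑ j, ∑ v, (((G j).degree v : ℝ) ^ 2 - (G j).degree v) := by
    rw [← Finset.mul_sum, Finset.sum_comm]
  have hupper : ∑ j, ∑ v, (((G j).degree v : ℝ) ^ 2 - (G j).degree v) ≤
      ∑ _j : ι, (Fintype.card V * (Fintype.card V - 1) : ℝ) :=
    Finset.sum_le_sum fun j _ ↦ hlayer j
  have hends : Fintype.card ι * ∑ _j : ι, (Fintype.card V * (Fintype.card V - 1) : ℝ) ≤
      ∑ _v : V, (D ^ 2 - Fintype.card ι * D) := by
    simp only [Finset.sum_const, Finset.card_univ, nsmul_eq_mul]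
    linarith [mul_le_mul_of_nonneg_left hcard (Nat.cast_nonneg (Fintype.card V))]
  have hupper_mul := mul_le_mul_of_nonneg_left hupper hm.le
  constructor
  · intro v
    have htight := hlower.antisymm (hswap.trans_le (hupper_mul.trans hends))
    exact card_mul_eq_of_sq_sub_card_mul_eq hD (hdeg v)
      ((Finset.sum_eq_sum_iff_of_le fun v _ ↦ hvertex v).1 htight v (Finset.mem_univ v)) j
  · have htight := mul_left_cancel₀ hm.ne' <|
      hupper_mul.antisymm (hends.trans (hlower.trans_eq hswap))
    exact card_commonNeighbors_eq_one_of_sum_degree_sq_sub_degree_eq (hG j) <|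
      (Finset.sum_eq_sum_iff_of_le fun j _ ↦ hlayer j).1 htight j (Finset.mem_univ j)

theorem card_eq_three_of_cycleGraph_four_free_of_le_sum_degree [Nonempty V]
    (hG : ∀ j, (cycleGraph 4).Free (G j)) (hD : 0 < D) (hD' : (Fintype.card ι : ℝ) ≤ 2 * D)
    (hdeg : ∀ v, D ≤ ∑ j, ((G j).degree v : ℝ))
    (hcard : (Fintype.card ι : ℝ) ^ 2 * (Fintype.card V - 1) ≤ D ^ 2 - Fintype.card ι * D) :
    Fintype.card V = 3 ∧ D = 2 * Fintype.card ι := by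
  classical
  obtain ⟨j⟩ := ‹Nonempty ι›
  have v₀ : V := Classical.arbitrary V
  obtain ⟨hreg, hcommon⟩ := regular_of_cycleGraph_four_free_of_le_sum_degree hG hD' hdeg hcard j
  have hm : (Fintype.card ι : ℝ) ≠ 0 := by
    rintro hm
    simpa [hm, hD.ne] using hreg v₀
  have hsrg : (G j).IsSRGWith (Fintype.card V) ((G j).degree v₀) 1 1 :=
    { card := rfl
      regular := fun v ↦ by exact_mod_cast mul_left_cancel₀ hm ((hreg v).trans (hreg v₀).symm)
      of_adj := fun u v huv ↦ by convert hcommon huv.ne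
      of_not_adj := fun u v huv _ ↦ by convert hcommon huv }
  obtain hzero | htwo := degree_eq_zero_or_two_of_isSRGWith_one_one hsrg
  · simp [← hreg v₀, hzero] at hD
  · rw [htwo] at hsrg
    exact ⟨card_eq_three_of_isSRGWith_two_one_one hsrg, by rw [← hreg v₀, htwo]; push_cast; ring⟩

end LayeredGraphs

section Colorings

variable {K V W : Type*}

/-- The graph of the edges of color `k`. The values of `c` on the diagonal are ignored. -/
def colorClass (c : Sym2 V → K) (k : K) : SimpleGraph V :=
  fromEdgeSet (c ⁻¹' {k})

@[simp]
lemma colorClass_adj {c : Sym2 V → K} {k : K} {u v : V} :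
    (colorClass c k).Adj u v ↔ c s(u, v) = k ∧ u ≠ v := by
  simp [colorClass]

lemma colorClass_comp_map (c : Sym2 W → K) (k : K) (f : V ↪ W) :
    colorClass (c ∘ Sym2.map f) k = (colorClass c k).comap f := by
  ext u v
  simp

lemma sum_degree_colorClass_add_one [Fintype K] [Fintype V] (c : Sym2 V → K)
    [∀ k, DecidableRel (colorClass c k).Adj] (v : V) :
    ∑ k, (colorClass c k).degree v + 1 = Fintype.card V := by
  classical
  have hfiber (k : K) : (colorClass c k).degree v =
      ((Finset.univ.erase v).filter fun u ↦ c s(v, u) = k).card := by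
    rw [← card_neighborFinset_eq_degree]
    congr 1
    ext u
    simp [and_comm, eq_comm]
  simp only [hfiber]
  rw [← Finset.card_eq_sum_card_fiberwise (f := fun u ↦ c s(v, u)) fun _ _ ↦ Finset.mem_univ _,
    Finset.card_erase_add_one (Finset.mem_univ v), Finset.card_univ]

/-- Every coloring of the pairs of elements of `V` has a copy of some `Y k` in color `k`. For
`V = Fin N` this is the property whose least positive instance is the Ramsey number of `Y`. -/
def Unavoidable (Y : K → VGraph) (V : Type*) : Prop :=
  ∀ c : Sym2 V → K, ∃ k, (Y k).G ⊑ colorClass c k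

namespace Unavoidable

variable {Y : K → VGraph}

lemma reindex_iff {L : Type*} (e : L ≃ K) : Unavoidable (Y ∘ e) V ↔ Unavoidable Y V := by
  have hclass (c : Sym2 V → L) (l : L) : colorClass (e ∘ c) (e l) = colorClass c l := by
    ext
    simp
  constructor
  · intro h c
    obtain ⟨l, hl⟩ := h (e.symm ∘ c)
    exact ⟨e l, by simpa [← hclass, ← Function.comp_assoc] using hl⟩
  · intro h c
    obtain ⟨k, hk⟩ := h (e ∘ c)
    obtain ⟨l, rfl⟩ := e.surjective k
    exact ⟨l, hclass c l ▸ hk⟩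

lemma of_embedding (h : Unavoidable Y V) (f : V ↪ W) : Unavoidable Y W := by
  intro c
  obtain ⟨k, hk⟩ := h (c ∘ Sym2.map f)
  rw [colorClass_comp_map] at hk
  exact ⟨k, hk.trans ⟨(Embedding.comap f _).toCopy⟩⟩

lemma of_isContained {Z : K → VGraph} (h : Unavoidable Y V) (hZ : ∀ k, (Z k).G ⊑ (Y k).G) :
    Unavoidable Z V := fun c ↦
  (h c).imp fun k hk ↦ (hZ k).trans hk

lemma exists_subsingleton [Nonempty K] [Subsingleton V] (h : Unavoidable Y V) :
    ∃ k, Subsingleton (Y k).V := by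
  obtain ⟨k, ⟨f⟩⟩ := h fun _ ↦ Classical.arbitrary K
  exact ⟨k, f.injective.subsingleton⟩

end Unavoidable

end Colorings

section Deletion

lemma isContained_of_induce_isContained_induce_neighborSet {V W : Type*} {H : SimpleGraph W}
    {G : SimpleGraph V} {w : W} {x : V}
    (h : H.induce {v | v ≠ w} ⊑ G.induce (G.neighborSet x)) : H ⊑ G := by
  classical
  obtain ⟨f⟩ := h
  have hx (a : {v | v ≠ w}) : G.Adj x (f a) := (f a).2
  refine ⟨⟨⟨fun v ↦ if h : v = w then x else f ⟨v, h⟩, fun {a b} hab ↦ ?_⟩, fun a b hab ↦ ?_⟩⟩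
  · by_cases ha : a = w <;> by_cases hb : b = w <;> simp only [ha, hb, dite_true, dite_false]
    · exact absurd (ha.trans hb.symm) hab.ne
    · exact hx _
    · exact (hx _).symm
    · exact f.toHom.map_adj (v := ⟨a, ha⟩) (w := ⟨b, hb⟩) hab
  · by_cases ha : a = w <;> by_cases hb : b = w <;>
      simp only [RelHom.coeFn_mk, ha, hb, dite_true, dite_false] at hab
    · rw [ha, hb]
    · exact absurd hab (hx _).ne
    · exact absurd hab.symm (hx _).ne
    · exact congrArg Subtype.val (f.injective (Subtype.ext hab))

lemma isContained_or_nonempty_iso_top_fin_two {V W : Type*} [Nontrivial V] (H : SimpleGraph W)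
    (G : SimpleGraph V) {w : W} (hw : ({w}ᶜ : Set W).Subsingleton) :
    H ⊑ G ∨ Nonempty (H ≃g (⊤ : SimpleGraph (Fin 2))) := by
  classical
  obtain rfl | hH := eq_or_ne H ⊥
  · obtain ⟨x, y, hxy⟩ := exists_pair_ne V
    have hinj : Function.Injective fun v ↦ if v = w then x else y := fun u v huv ↦ by
      by_cases h : u ≠ w ∧ v ≠ w
      · exact hw h.1 h.2
      · grind
    exact .inl ⟨⟨⟨_, False.elim⟩, hinj⟩⟩
  · obtain ⟨a, b, hab⟩ := ne_bot_iff_exists_adj.1 hH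
    have hpair (v : W) : v = a ∨ v = b := by
      obtain rfl | hv := eq_or_ne v w
      · by_contra! hne
        exact hab.ne (hw hne.1.symm hne.2.symm)
      · obtain rfl | ha := eq_or_ne a w
        · exact .inr (hw hv hab.ne')
        · exact .inl (hw hv ha)
    have htop : H = ⊤ := by
      ext u v
      refine ⟨fun huv ↦ huv.ne, fun huv ↦ ?_⟩
      grind [top_adj, hpair u, hpair v, hab.symm]
    have hcard : Nat.card W = 2 :=
      Nat.card_eq_two_iff.2 ⟨a, b, hab.ne, Set.eq_univ_of_forall hpair⟩
    have := Nat.finite_of_card_ne_zero (hcard.trans_ne two_ne_zero)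
    rw [htop]
    exact .inr ⟨Iso.completeGraph (Finite.equivFinOfCardEq hcard)⟩

variable {K V : Type*} [DecidableEq K] {Y : K → VGraph} {k : K} {w : (Y k).V}

lemma VGraph.update_delete_isContained (w : (Y k).V) (l : K) :
    (Function.update Y k ((Y k).delete w) l).G ⊑ (Y l).G := by
  obtain rfl | hl := eq_or_ne l k
  · rw [Function.update_self]
    exact ⟨Copy.induce _ _⟩
  · rw [Function.update_of_ne hl]
    exact .rfl

lemma degree_colorClass_lt [Fintype V] {c : Sym2 V → K} [DecidableRel (colorClass c k).Adj]
    (hc : ∀ l, (Y l).G.Free (colorClass c l)) {R : ℕ}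
    (hR : Unavoidable (Function.update Y k ((Y k).delete w)) (Fin R)) (x : V) :
    (colorClass c k).degree x < R := by
  by_contra! hle
  rw [← card_neighborSet_eq_degree, ← Fintype.card_fin R] at hle
  obtain ⟨f⟩ := Function.Embedding.nonempty_of_card_le hle
  obtain ⟨l, hl⟩ := hR.of_embedding f (c ∘ Sym2.map (Function.Embedding.subtype _))
  rw [colorClass_comp_map] at hl
  obtain rfl | hne := eq_or_ne l k
  · rw [Function.update_self] at hl
    exact hc l (isContained_of_induce_isContained_induce_neighborSet hl)
  · rw [Function.update_of_ne hne] at hl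
    exact hc l (hl.trans ⟨(Embedding.comap _ _).toCopy⟩)

lemma nonempty_iso_top_fin_two_of_unavoidable_update_delete [Nontrivial V] {c : Sym2 V → K}
    (hc : ∀ l, (Y l).G.Free (colorClass c l))
    (h : Unavoidable (Function.update Y k ((Y k).delete w)) (Fin 1)) :
    Nonempty ((Y k).G ≃g (⊤ : SimpleGraph (Fin 2))) := by
  have : Nonempty K := ⟨k⟩
  obtain ⟨l, hl⟩ := h.exists_subsingleton
  obtain rfl | hne := eq_or_ne l k
  · rw [Function.update_self] at hl
    have hw : ({w}ᶜ : Set (Y l).V).Subsingleton := Set.subsingleton_coe _ |>.1 hl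
    exact (isContained_or_nonempty_iso_top_fin_two _ _ hw).resolve_left (hc l)
  · rw [Function.update_of_ne hne] at hl
    refine absurd ⟨⟨⟨fun _ ↦ Classical.arbitrary V, fun {a b} hab ↦ ?_⟩, ?_⟩⟩ (hc l)
    · exact absurd (Subsingleton.elim a b) hab.ne
    · exact Function.injective_of_subsingleton _

end Deletion

section RamseyNumbers

variable {K : Type*} {Y : K → VGraph}

/-- The Ramsey number of a family of graphs indexed by the set `K` of colors, with the junk value
`0` if there is no positive `N` for which the family is unavoidable. -/
noncomputable def familyRamseyNumber (Y : K → VGraph) : ℕ :=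
  sInf {N | 0 < N ∧ Unavoidable Y (Fin N)}

lemma unavoidable_familyRamseyNumber (h : 0 < familyRamseyNumber Y) :
    Unavoidable Y (Fin (familyRamseyNumber Y)) :=
  (Nat.sInf_mem (Nat.nonempty_of_pos_sInf h)).2

lemma familyRamseyNumber_pos {N : ℕ} (hN : 0 < N) (h : Unavoidable Y (Fin N)) :
    0 < familyRamseyNumber Y :=
  (Nat.sInf_mem (show {N | 0 < N ∧ Unavoidable Y (Fin N)}.Nonempty from ⟨N, hN, h⟩)).1

lemma exists_forall_free_colorClass {N : ℕ} (hN : 0 < N) (hlt : N < familyRamseyNumber Y) :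
    ∃ c : Sym2 (Fin N) → K, ∀ k, (Y k).G.Free (colorClass c k) := by
  simpa [Unavoidable, hN, Free] using Nat.notMem_of_lt_sInf hlt

lemma ramseyProp_iff_unavoidable (l : List VGraph) (N : ℕ) :
    ramseyProp l N ↔ Unavoidable l.get (Fin N) := by
  refine forall_congr' fun c ↦ exists_congr fun k ↦ ?_
  constructor
  · rintro ⟨f, hf⟩
    exact ⟨⟨⟨f, fun hab ↦ colorClass_adj.2 ⟨hf _ _ hab, f.injective.ne hab.ne⟩⟩, f.injective⟩⟩
  · rintro ⟨f⟩
    exact ⟨f.toEmbedding, fun _ _ hab ↦ (colorClass_adj.1 (f.toHom.map_adj hab)).1⟩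

lemma ramseyNumber_eq_familyRamseyNumber {l : List VGraph} (e : K ≃ Fin l.length) :
    ramseyNumber l = familyRamseyNumber (l.get ∘ e) := by
  simp only [ramseyNumber, familyRamseyNumber, ramseyProp_iff_unavoidable,
    Unavoidable.reindex_iff]

lemma ramseyNumber_replicate_append_ofFn {m n : ℕ} (Z : VGraph) (X : Fin n → VGraph) :
    ramseyNumber (List.replicate m Z ++ List.ofFn X) =
      familyRamseyNumber (Sum.elim (fun _ : Fin m ↦ Z) X) := by
  rw [ramseyNumber_eq_familyRamseyNumber
    (finSumFinEquiv.trans (finCongr (by simp) : Fin (m + n) ≃ _))]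
  congr 1
  ext (j | i) <;> simp

lemma ramseyNumber_update_delete_pos {m n : ℕ} {Z : VGraph} {X : Fin n → VGraph}
    (h : 0 < ramseyNumber (List.replicate m Z ++ List.ofFn X)) (i : Fin n) (w : (X i).V) :
    0 < ramseyNumber
      (List.replicate m Z ++ List.ofFn (Function.update X i ((X i).delete w))) := by
  rw [ramseyNumber_replicate_append_ofFn] at h ⊢
  rw [Sum.elim_update_right]
  exact familyRamseyNumber_pos h <| (unavoidable_familyRamseyNumber h).of_isContained <|
    VGraph.update_delete_isContained (Y := Sum.elim (fun _ ↦ Z) X) (k := .inr i) w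

end RamseyNumbers

section Arithmetic

variable {m s D : ℝ}

lemma sq_add_self_le_of_add_mul_sqrt_le (hm : 0 ≤ m) (hs : 0 ≤ s)
    (hD : (m ^ 2 + m) / 2 + m * √((m + 1) ^ 2 / 4 + s) ≤ D) : m ^ 2 + m ≤ D := by
  have hroot : (m + 1) / 2 ≤ √((m + 1) ^ 2 / 4 + s) := Real.le_sqrt_of_sq_le (by linarith)
  linarith [mul_le_mul_of_nonneg_left hroot hm]

-- The lower bound on `D` is the larger root of the polynomial `D ^ 2 - m * D - m ^ 2 * (D + s)`.
lemma sq_mul_add_le_of_add_mul_sqrt_le (hm : 0 ≤ m) (hs : 0 ≤ s)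
    (hD : (m ^ 2 + m) / 2 + m * √((m + 1) ^ 2 / 4 + s) ≤ D) :
    m ^ 2 * (D + s) ≤ D ^ 2 - m * D := by
  have hsq : (m * √((m + 1) ^ 2 / 4 + s)) ^ 2 ≤ (D - (m ^ 2 + m) / 2) ^ 2 := by
    gcongr
    linarith
  rw [mul_pow, Real.sq_sqrt (by positivity)] at hsq
  linarith

-- The ceiling can be dropped because `(m ^ 2 + m) / 2` is an integer.
lemma exists_eq_add_two_and_add_le_of_add_ceil_lt {m R : ℕ} {s : ℤ} {x : ℝ} (hs : 0 ≤ s)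
    (hx : 0 ≤ x) (h : s + 1 + ((m : ℝ) ^ 2 + m) / 2 + ⌈x⌉ < R) :
    ∃ N, R = N + 2 ∧ s + 1 + ((m : ℝ) ^ 2 + m) / 2 + x ≤ (N + 1 : ℕ) := by
  obtain ⟨k, hk⟩ := Nat.even_mul_succ_self m
  have hhalf : ((m : ℝ) ^ 2 + m) / 2 = (k : ℤ) := by
    rify at hk
    push_cast
    linarith
  rw [hhalf] at h ⊢
  have hlt : s + 1 + k + ⌈x⌉ < R := by exact_mod_cast h
  have hceil : 0 ≤ ⌈x⌉ := Int.ceil_nonneg hx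
  obtain ⟨N, rfl⟩ := Nat.exists_eq_add_of_le' (show 2 ≤ R by omega)
  refine ⟨N, rfl, ?_⟩
  have hle : s + 1 + k + ⌈x⌉ ≤ (N + 1 : ℕ) := by omega
  rify at hle
  push_cast at hle ⊢
  linarith [Int.le_ceil x]

end Arithmetic

section ExtremalColorings

theorem card_eq_three_of_cycleGraph_four_free_colorClass {ι κ V : Type*} [Fintype ι] [Nonempty ι]
    [Fintype κ] [Fintype V] [Nonempty V] {c : Sym2 V → ι ⊕ κ}
    [∀ k, DecidableRel (colorClass c k).Adj] {s : ℝ}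
    (hfree : ∀ j, (cycleGraph 4).Free (colorClass c (.inl j)))
    (hdeg : ∀ v, ∑ i, ((colorClass c (.inr i)).degree v : ℝ) ≤ s)
    (hcard : s + 1 + ((Fintype.card ι : ℝ) ^ 2 + Fintype.card ι) / 2 +
      Fintype.card ι * √(((Fintype.card ι : ℝ) + 1) ^ 2 / 4 + s) ≤ Fintype.card V) :
    Fintype.card V = 3 ∧ Fintype.card ι = 1 ∧ s = 0 := by
  have hs : 0 ≤ s := (Finset.sum_nonneg fun _ _ ↦ Nat.cast_nonneg _).trans
    (hdeg (Classical.arbitrary V))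
  have hm : (1 : ℝ) ≤ Fintype.card ι := by exact_mod_cast Fintype.card_pos (α := ι)
  have hm0 := zero_le_one.trans hm
  set D : ℝ := Fintype.card V - 1 - s with hD
  have hD_root : ((Fintype.card ι : ℝ) ^ 2 + Fintype.card ι) / 2 +
      Fintype.card ι * √(((Fintype.card ι : ℝ) + 1) ^ 2 / 4 + s) ≤ D := by linarith
  have hD_ge := sq_add_self_le_of_add_mul_sqrt_le hm0 hs hD_root
  have hD_quad := sq_mul_add_le_of_add_mul_sqrt_le hm0 hs hD_root
  have hdeg_inl (v : V) : D ≤ ∑ j, ((colorClass c (.inl j)).degree v : ℝ) := by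
    have htotal := sum_degree_colorClass_add_one c v
    rw [Fintype.sum_sum_type] at htotal
    rify at htotal
    linarith [hdeg v]
  obtain ⟨hV, hD_eq⟩ := card_eq_three_of_cycleGraph_four_free_of_le_sum_degree hfree
    (by nlinarith) (by nlinarith) hdeg_inl (by rwa [← sub_add_cancel (Fintype.card V - 1 : ℝ) s])
  rw [hV] at hD
  push_cast at hD
  have hι : (Fintype.card ι : ℝ) = 1 := by linarith
  exact ⟨hV, by exact_mod_cast hι, by linarith⟩

theorem familyRamseyNumber_le_of_inl_eq_C4 {ι κ : Type*} [Fintype ι] [Nonempty ι]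
    [DecidableEq ι] [Fintype κ] [DecidableEq κ] {Y : ι ⊕ κ → VGraph} (hY : ∀ j, Y (.inl j) = C4)
    {w : ∀ i, (Y (.inr i)).V} {r : κ → ℤ}
    (hpos : ∀ i, 0 < familyRamseyNumber
      (Function.update Y (.inr i) ((Y (.inr i)).delete (w i))))
    (hr : ∀ i, (familyRamseyNumber
      (Function.update Y (.inr i) ((Y (.inr i)).delete (w i))) : ℤ) ≤ r i)
    (hK2 : Fintype.card ι = 1 → ∃ i, ¬ Nonempty ((Y (.inr i)).G ≃g (⊤ : SimpleGraph (Fin 2)))) :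
    (familyRamseyNumber Y : ℝ) ≤
      (∑ i, (r i - 1) : ℤ) + 1 + ((Fintype.card ι : ℝ) ^ 2 + Fintype.card ι) / 2 +
        ⌈Fintype.card ι * √(((Fintype.card ι : ℝ) + 1) ^ 2 / 4 + (∑ i, (r i - 1) : ℤ))⌉ := by
  classical
  have hr_ge (i : κ) : 0 ≤ r i - 1 := by linarith [hr i, Int.natCast_pos.2 (hpos i)]
  by_contra! hlt
  obtain ⟨N, hN, hbound⟩ := exists_eq_add_two_and_add_le_of_add_ceil_lt
    (Finset.sum_nonneg fun i _ ↦ hr_ge i) (by positivity) hlt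
  obtain ⟨c, hc⟩ := exists_forall_free_colorClass (Y := Y) N.succ_pos (by omega)
  have hfree (j : ι) : (cycleGraph 4).Free (colorClass c (.inl j)) := by
    have := hc (.inl j)
    rwa [hY] at this
  have hdeg (v : Fin (N + 1)) :
      ∑ i, ((colorClass c (.inr i)).degree v : ℝ) ≤ (∑ i, (r i - 1) : ℤ) := by
    have hdeg_le (i : κ) : ((colorClass c (.inr i)).degree v : ℤ) ≤ r i - 1 := by
      linarith [hr i, Int.ofNat_lt.2 <|
        degree_colorClass_lt hc (unavoidable_familyRamseyNumber (hpos i)) v]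
    exact_mod_cast Finset.sum_le_sum fun i _ ↦ hdeg_le i
  obtain ⟨hcard, hι, hs⟩ := card_eq_three_of_cycleGraph_four_free_colorClass hfree hdeg
    (by rwa [Fintype.card_fin])
  obtain rfl : N = 2 := by simpa using hcard
  obtain ⟨i, hi⟩ := hK2 hι
  have hri : r i - 1 = 0 := (Finset.sum_eq_zero_iff_of_nonneg fun i _ ↦ hr_ge i).1
    (by exact_mod_cast hs) i (Finset.mem_univ i)
  have hone : familyRamseyNumber (Function.update Y (.inr i) ((Y (.inr i)).delete (w i))) = 1 :=
    le_antisymm (by linarith [hr i]) (hpos i)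
  exact hi <| nonempty_iso_top_fin_two_of_unavoidable_update_delete hc <|
    hone ▸ unavoidable_familyRamseyNumber (hpos i)

end ExtremalColorings

theorem statement0_general (m n : ℕ) (hm : 1 ≤ m) (X : Fin n → VGraph)
    (w : ∀ i, (X i).V) (r : Fin n → ℤ)
    (hpos : ∀ i, 0 < ramseyNumber (List.replicate m C4 ++
        List.ofFn (Function.update X i ((X i).delete (w i)))))
    (hr : ∀ i, (ramseyNumber (List.replicate m C4 ++
        List.ofFn (Function.update X i ((X i).delete (w i)))) : ℤ) ≤ r i)
    (hK2 : m = 1 → ∃ i, ¬ Nonempty ((X i).G ≃g (⊤ : SimpleGraph (Fin 2)))) :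
    ((ramseyNumber (List.replicate m C4 ++ List.ofFn X) : ℝ)) ≤
      (∑ i, (r i : ℝ)) - n + 1 + ((m : ℝ) ^ 2 + m) / 2 +
      (⌈(m : ℝ) * Real.sqrt (((m : ℝ) + 1) ^ 2 / 4 + (∑ i, (r i : ℝ)) - n)⌉ : ℝ) := by
  have : Nonempty (Fin m) := ⟨⟨0, hm⟩⟩
  simp only [ramseyNumber_replicate_append_ofFn, Sum.elim_update_right] at hpos hr ⊢
  have hsum : ∑ i, (r i : ℝ) - n = (∑ i, (r i - 1) : ℤ) := by simp
  have hle := familyRamseyNumber_le_of_inl_eq_C4 (fun _ ↦ rfl) hpos hr (by simpa using hK2)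
  rwa [Fintype.card_fin, ← hsum, ← add_sub_assoc] at hle

/-- Main theorem: upper bound on `R(C₄,…,C₄ (m copies), G₁,…,Gₙ)`. -/
theorem statement0 (m n : ℕ) (hm : 1 ≤ m) (X : Fin n → VGraph)
    [∀ i, Fintype (X i).V] (w : ∀ i, (X i).V) (r : Fin n → ℤ)
    (hr : ∀ i, (ramseyNumber (List.replicate m C4 ++
        List.ofFn (Function.update X i ((X i).delete (w i)))) : ℤ) ≤ r i)
    (hmax : ∀ i, Fintype.card (X i).V <
        ramseyNumber (List.replicate m C4 ++ List.ofFn X))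
    (hK2 : m = 1 → ∃ i, ¬ Nonempty ((X i).G ≃g (⊤ : SimpleGraph (Fin 2)))) :
    ((ramseyNumber (List.replicate m C4 ++ List.ofFn X) : ℝ)) ≤
      (∑ i, (r i : ℝ)) - n + 1 + ((m : ℝ) ^ 2 + m) / 2 +
      (⌈(m : ℝ) * Real.sqrt (((m : ℝ) + 1) ^ 2 / 4 + (∑ i, (r i : ℝ)) - n)⌉ : ℝ) :=
  statement0_general m n hm X w r
    (fun i ↦ ramseyNumber_update_delete_pos (Nat.zero_lt_of_lt (hmax i)) i (w i)) hr hK2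
end

section
/- For every integer k ≥ 2, the two-color Ramsey number satisfies R(C_4, K_{1,k}) ≤ k + ⌈√k⌉ + 1. -/
open SimpleGraph

/-!
Let `m = ⌈√k⌉`, so that `N = k + m + 1 ≤ m² + m + 1`. If no vertex of `K_N` has `k` edges in the
second color, then the first color class has minimum degree at least `m + 1`. If that class also
contains no `C₄`, any two of its vertices have at most one common neighbor, and counting walks of
length two forces equality everywhere: it is strongly regular, with exactly one common neighbor for
every pair of vertices.

As in the linear algebra proof of the friendship theorem, this is impossible. Modulo a prime `p`
dividing `m`, the adjacency matrix `A` satisfies `A² = J` and `A J = J` with `J` the all-ones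
matrix, so `A ^ p = J` and `N = tr J = tr (A ^ p) = (tr A) ^ p = 0`, whereas comparing row sums in
`A² = J` gives `N = 1`.
-/

section CommonNeighbors

variable {V : Type*} [Fintype V] {G : SimpleGraph V} [DecidableRel G.Adj]

variable (G) in
lemma sum_card_commonNeighbors (v : V) :
    ∑ w, Fintype.card (G.commonNeighbors v w) = ∑ u ∈ G.neighborFinset v, G.degree u := by
  classical
  have h_common (w : V) : Fintype.card (G.commonNeighbors v w) =
      ((G.neighborFinset v).bipartiteBelow G.Adj w).card := by
    rw [← Set.toFinset_card]
    congr 1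
    ext u
    simp [G.adj_comm w, mem_commonNeighbors]
  have h_degree (u : V) : G.degree u = (Finset.univ.bipartiteAbove G.Adj u).card := by
    rw [Finset.bipartiteAbove, ← neighborFinset_eq_filter, card_neighborFinset_eq_degree]
  simp only [h_common, h_degree, Finset.sum_card_bipartiteAbove_eq_sum_card_bipartiteBelow]

variable (G) in
lemma card_commonNeighbors_self (v : V) : Fintype.card (G.commonNeighbors v v) = G.degree v := by
  simp only [commonNeighbors_eq, Set.inter_self, card_neighborSet_eq_degree]

lemma degree_mul_le_sum_card_commonNeighbors [DecidableEq V] {k : ℕ}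
    (h_deg : ∀ u, k + 1 ≤ G.degree u) (v : V) :
    G.degree v * k ≤ ∑ w ∈ Finset.univ.erase v, Fintype.card (G.commonNeighbors v w) := by
  refine Nat.le_of_add_le_add_left (a := G.degree v) ?_
  calc G.degree v + G.degree v * k = (G.neighborFinset v).card • (k + 1) := by
        rw [card_neighborFinset_eq_degree, smul_eq_mul]; ring
    _ ≤ ∑ u ∈ G.neighborFinset v, G.degree u := Finset.card_nsmul_le_sum _ _ _ fun u _ => h_deg u
    _ = G.degree v + ∑ w ∈ Finset.univ.erase v, Fintype.card (G.commonNeighbors v w) := by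
        rw [← sum_card_commonNeighbors, ← Finset.add_sum_erase _ _ (Finset.mem_univ v),
          card_commonNeighbors_self]

lemma isSRGWith_of_card_commonNeighbors_le {k l : ℕ} (hk : 0 < k)
    (h_deg : ∀ v, k + 1 ≤ G.degree v)
    (h_common : ∀ v w, v ≠ w → Fintype.card (G.commonNeighbors v w) ≤ l)
    (h_card : (Fintype.card V - 1) * l ≤ (k + 1) * k) :
    G.IsSRGWith (Fintype.card V) (k + 1) l l := by
  classical
  have h_le (v : V) : ∀ w ∈ Finset.univ.erase v, Fintype.card (G.commonNeighbors v w) ≤ l :=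
    fun w hw => h_common v w (Finset.ne_of_mem_erase hw).symm
  have h_const (v : V) : ∑ _w ∈ Finset.univ.erase v, l = (Fintype.card V - 1) * l := by
    rw [Finset.sum_const, Finset.card_erase_of_mem (Finset.mem_univ v), Finset.card_univ,
      smul_eq_mul]
  have h_lower (v : V) := degree_mul_le_sum_card_commonNeighbors h_deg v
  have h_regular : G.IsRegularOfDegree (k + 1) := fun v => by
    refine le_antisymm (Nat.le_of_mul_le_mul_right ?_ hk) (h_deg v)
    calc G.degree v * k ≤ ∑ w ∈ Finset.univ.erase v, Fintype.card (G.commonNeighbors v w) :=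
          h_lower v
      _ ≤ ∑ _w ∈ Finset.univ.erase v, l := Finset.sum_le_sum (h_le v)
      _ ≤ (k + 1) * k := (h_const v).trans_le h_card
  have h_sum_eq (v : V) :
      ∑ w ∈ Finset.univ.erase v, Fintype.card (G.commonNeighbors v w) =
        ∑ _w ∈ Finset.univ.erase v, l := by
    refine (Finset.sum_le_sum (h_le v)).antisymm ?_
    calc ∑ _w ∈ Finset.univ.erase v, l ≤ (k + 1) * k := (h_const v).trans_le h_card
      _ = G.degree v * k := by rw [h_regular.degree_eq]
      _ ≤ _ := h_lower v
  have h_eq (v w : V) (hvw : v ≠ w) : Fintype.card (G.commonNeighbors v w) = l :=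
    (Finset.sum_eq_sum_iff_of_le (h_le v)).1 (h_sum_eq v) w
      (Finset.mem_erase.2 ⟨hvw.symm, Finset.mem_univ w⟩)
  exact ⟨rfl, h_regular, fun v w hvw => h_eq v w hvw.ne, fun v w hvw _ => h_eq v w hvw⟩

end CommonNeighbors

section StronglyRegular

open Matrix

variable {V : Type*} [Fintype V] {G : SimpleGraph V} [DecidableRel G.Adj] {n k l : ℕ}

lemma adjMatrix_sq_of_isSRGWith_of_cast_eq [DecidableEq V] {R : Type*} [Semiring R]
    (h : G.IsSRGWith n k l l) (hkl : (k : R) = l) : G.adjMatrix R ^ 2 = (l : R) • of 1 := by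
  classical
  rw [h.matrix_eq, ← one_add_adjMatrix_add_compl_adjMatrix_eq_of_one R G,
    compl_adjMatrix_eq_adjMatrix_compl]
  simp only [← Nat.cast_smul_eq_nsmul R, hkl, smul_add]

lemma adjMatrix_pow_of_isSRGWith_of_cast_eq [DecidableEq V] {R : Type*} [Semiring R]
    (h : G.IsSRGWith n k l l) (hkl : (k : R) = l) (i : ℕ) :
    G.adjMatrix R ^ (i + 2) = (l : R) ^ (i + 1) • of 1 := by
  induction i with
  | zero => simpa using adjMatrix_sq_of_isSRGWith_of_cast_eq h hkl
  | succ i ih =>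
    rw [show i + 1 + 2 = (i + 2) + 1 by rfl, pow_succ', ih]
    ext v w
    simp [adjMatrix_mul_apply, h.regular.degree_eq, hkl, pow_succ' (l : R) (i + 1)]

lemma card_mul_cast_eq_sq_of_isSRGWith_of_cast_eq {R : Type*} [Semiring R] [Nonempty V]
    (h : G.IsSRGWith n k l l) (hkl : (k : R) = l) : (n * l : R) = (l : R) ^ 2 := by
  classical
  obtain ⟨v⟩ := ‹Nonempty V›
  have h_row_sums (a : R) : G.adjMatrix R *ᵥ Function.const V a = Function.const V (l * a) := by
    ext w
    rw [adjMatrix_mulVec_const_apply_of_regular h.regular, hkl, Function.const_apply]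
  calc (n * l : R) = (((l : R) • of 1) *ᵥ Function.const V 1) v := by
        simp [mulVec, dotProduct, h.card]
    _ = (G.adjMatrix R ^ 2 *ᵥ Function.const V 1) v := by
        rw [adjMatrix_sq_of_isSRGWith_of_cast_eq h hkl]
    _ = (l : R) ^ 2 := by
        rw [pow_two, ← mulVec_mulVec, h_row_sums, h_row_sums, Function.const_apply, mul_one,
          pow_two]

lemma prime_dvd_of_isSRGWith [Nonempty V] {p : ℕ} (hp : p.Prime) (h : G.IsSRGWith n k l l)
    (hkl : k ≡ l [MOD p]) : p ∣ l := by
  classical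
  have : Fact p.Prime := ⟨hp⟩
  have hkl' : (k : ZMod p) = l := (ZMod.natCast_eq_natCast_iff k l p).2 hkl
  rw [← ZMod.natCast_eq_zero_iff]
  have h_pow : G.adjMatrix (ZMod p) ^ p = (l : ZMod p) ^ (p - 2 + 1) • of 1 := by
    rw [← adjMatrix_pow_of_isSRGWith_of_cast_eq h hkl', Nat.sub_add_cancel hp.two_le]
  have h_trace : (n : ZMod p) * l ^ (p - 2 + 1) = 0 :=
    calc (n : ZMod p) * l ^ (p - 2 + 1) = (G.adjMatrix (ZMod p) ^ p).trace := by
          simp [h_pow, Matrix.trace, h.card]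
      _ = 0 := by rw [ZMod.trace_pow_card, trace_adjMatrix, zero_pow hp.ne_zero]
  have h_sq := card_mul_cast_eq_sq_of_isSRGWith_of_cast_eq h hkl'
  obtain h_zero | h_zero := mul_eq_zero.1 h_trace
  · rw [h_zero, zero_mul] at h_sq
    exact eq_zero_of_pow_eq_zero h_sq.symm
  · exact eq_zero_of_pow_eq_zero h_zero

end StronglyRegular

lemma cycleGraph_four_isContained_of_nontrivial_commonNeighbors {V : Type*} {G : SimpleGraph V}
    {v w : V} (hvw : v ≠ w) (h : (G.commonNeighbors v w).Nontrivial) : cycleGraph 4 ⊑ G := by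
  obtain ⟨a, ⟨hva, hwa⟩, b, ⟨hvb, hwb⟩, hab⟩ := h
  rw [mem_neighborSet] at hva hwa hvb hwb
  refine ⟨⟨⟨![v, a, w, b], fun {i j} hij => ?_⟩, fun i j hij => ?_⟩⟩
  · rw [cycleGraph_adj] at hij
    fin_cases i <;> fin_cases j <;> first
      | exact absurd hij (by decide)
      | assumption
      | exact G.adj_symm ‹_›
  · have := hva.ne
    have := hwa.ne
    have := hvb.ne
    have := hwb.ne
    fin_cases i <;> fin_cases j <;> simp_all

lemma cycleGraph_four_isContained_of_lt_minDegree {V : Type*} [Fintype V] {G : SimpleGraph V}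
    [DecidableRel G.Adj] {k : ℕ} (hk : 2 ≤ k) (h_deg : k < G.minDegree)
    (h_card : Fintype.card V ≤ k * (k + 1) + 1) : cycleGraph 4 ⊑ G := by
  classical
  by_contra h_free
  have h_common (v w : V) (hvw : v ≠ w) : Fintype.card (G.commonNeighbors v w) ≤ 1 :=
    not_lt.1 fun h => h_free <| cycleGraph_four_isContained_of_nontrivial_commonNeighbors hvw <|
      Set.nontrivial_coe_sort.1 (Fintype.one_lt_card_iff_nontrivial.1 h)
  have : Nonempty V := by
    by_contra h_empty
    rw [not_nonempty_iff] at h_empty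
    simp at h_deg
  have h_srg : G.IsSRGWith (Fintype.card V) (k + 1) 1 1 :=
    isSRGWith_of_card_commonNeighbors_le (by lia)
      (fun v => h_deg.trans_le (G.minDegree_le_degree v)) h_common (by grind)
  obtain ⟨p, hp, hpk⟩ := Nat.exists_prime_and_dvd (show k ≠ 1 by lia)
  refine hp.one_lt.ne' (Nat.dvd_one.1 (prime_dvd_of_isSRGWith hp h_srg ?_))
  simpa using (Nat.modEq_zero_iff_dvd.2 hpk).add_right 1

lemma starGraph_isContained_of_le_degree {V : Type*} {G : SimpleGraph V} {v : V}
    [Fintype (G.neighborSet v)] {k : ℕ} (h : k ≤ G.degree v) : _root_.starGraph k ⊑ G := by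
  obtain ⟨leaf⟩ : Nonempty (Fin k ↪ G.neighborSet v) :=
    Function.Embedding.nonempty_of_card_le (by rwa [Fintype.card_fin, card_neighborSet_eq_degree])
  have h_adj (i : Fin k) : G.Adj v (leaf i) := (leaf i).2
  refine ⟨⟨⟨Fin.cons v fun i => (leaf i : V), ?_⟩, ?_⟩⟩
  · intro i j hij
    rw [_root_.starGraph, fromRel_adj] at hij
    obtain ⟨hne, rfl | rfl⟩ := hij
    · obtain ⟨j, rfl⟩ := Fin.exists_succ_eq.2 hne.symm
      exact h_adj j
    · obtain ⟨i, rfl⟩ := Fin.exists_succ_eq.2 hne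
      exact (h_adj i).symm
  · exact Fin.cons_injective_iff.2
      ⟨fun ⟨i, hi⟩ => (h_adj i).ne hi.symm, Subtype.val_injective.comp leaf.injective⟩

lemma cycleGraph_four_isContained_or_starGraph_isContained_compl {V : Type*} [Fintype V]
    (G : SimpleGraph V) {k m : ℕ} (hm : 2 ≤ m) (hkm : k ≤ m * m)
    (h_card : Fintype.card V = k + m + 1) :
    cycleGraph 4 ⊑ G ∨ _root_.starGraph k ⊑ Gᶜ := by
  classical
  by_cases h_deg : m < G.minDegree
  · exact .inl (cycleGraph_four_isContained_of_lt_minDegree hm h_deg (by lia))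
  · have : Nonempty V := Fintype.card_pos_iff.1 (by lia)
    obtain ⟨v, hv⟩ := G.exists_minimal_degree_vertex
    refine .inr (starGraph_isContained_of_le_degree (v := v) ?_)
    rw [degree_compl]
    lia

lemma ramseyProp_pair_of_forall_isContained {X Y : VGraph} {N : ℕ}
    (h : ∀ G : SimpleGraph (Fin N), X.G ⊑ G ∨ Y.G ⊑ Gᶜ) : ramseyProp [X, Y] N := by
  intro c
  let G := fromEdgeSet (c ⁻¹' {0})
  obtain ⟨⟨f⟩⟩ | ⟨⟨f⟩⟩ := h G
  · exact ⟨0, f.toEmbedding, fun u v huv => (f.toHom.map_adj huv).1⟩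
  · refine ⟨1, f.toEmbedding, fun u v huv => ?_⟩
    have h_adj : Gᶜ.Adj (f u) (f v) := f.toHom.map_adj huv
    have h_ne_zero : c s(f u, f v) ≠ 0 := fun h_zero => h_adj.2 ⟨h_zero, h_adj.1⟩
    exact Fin.eq_one_of_ne_zero _ h_ne_zero

/-- For `k ≥ 2`, `R(C₄, K_{1,k}) ≤ k + ⌈√k⌉ + 1`. -/
theorem statement4 (k : ℕ) (hk : 2 ≤ k) :
    ((ramseyNumber [C4, ⟨Fin (k + 1), starGraph k⟩] : ℝ)) ≤
      (k : ℝ) + (⌈Real.sqrt k⌉ : ℝ) + 1 := by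
  set m := ⌈√(k : ℝ)⌉₊
  have h_sq : k ≤ m * m := by
    have : (k : ℝ) ≤ (m : ℝ) ^ 2 := (Real.sqrt_le_left m.cast_nonneg).1 (Nat.le_ceil _)
    rw [← pow_two]
    exact_mod_cast this
  have h_two : 2 ≤ m := by nlinarith
  have h_le : ramseyNumber [C4, ⟨Fin (k + 1), starGraph k⟩] ≤ k + m + 1 :=
    Nat.sInf_le ⟨Nat.succ_pos _, ramseyProp_pair_of_forall_isContained fun G =>
      cycleGraph_four_isContained_or_starGraph_isContained_compl G h_two h_sq (Fintype.card_fin _)⟩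
  rw [← natCast_ceil_eq_intCast_ceil (Real.sqrt_nonneg _)]
  exact_mod_cast h_le
end
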